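/- arXiv:1603.00103 — 9 statements merged into one kernel-verified Lean document; each statement's English description precedes it below -/
import Mathlib

section
/- Let I = [i_1, …, i_d] be a word with letters in {1, …, r}. The letters of I are pairwise distinct (i.e. the map m ↦ i_m is injective) if and only if for every ε ∈ {0,1}^d the weights w_1(ε), …, w_d(ε) are pairwise non-collinear, i.e. for all ℓ ≠ m the vectors w_ℓ(ε) and w_m(ε) are not collinear. (This is the criterion for the Bott–Samelson space BS^I to be of GKM type.) -/
open scoped RealInnerProductSpace

variable {V : Type*} [NormedAddCommGroup V] [InnerProductSpace ℝ V]

/-- The reflection determined by a (nonzero) vector `β`. -/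
noncomputable def reflVec (β v : V) : V := v - ((2 * ⟪v, β⟫) / ⟪β, β⟫) • β

/-- `s_β^b`: the reflection if `b = true`, the identity otherwise. -/
noncomputable def reflPow (b : Bool) (β v : V) : V := if b then reflVec β v else v

/-- The weight at position `m` of the fixed point `ε` of the Bott–Samelson space of the
word `i : Fin d → Fin r`:  `w_m(ε) = s_{i_d}^{ε_d} ∘ ⋯ ∘ s_{i_m}^{ε_m} (α_{i_m})`. -/
noncomputable def bsWeight {r d : ℕ} (α : Fin r → V) (i : Fin d → Fin r)
    (ε : Fin d → Bool) (m : Fin d) : V :=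
  ((List.finRange d).filter (fun k => decide (m ≤ k))).foldl
    (fun v k => reflPow (ε k) (α (i k)) v) (α (i m))

/-- Two vectors are collinear if one is a real scalar multiple of the other. -/
def CollinearPair (u v : V) : Prop := (∃ c : ℝ, u = c • v) ∨ (∃ c : ℝ, v = c • u)

theorem aux_reflVec_invol (β v : V) (hβ : β ≠ 0) : reflVec β (reflVec β v) = v := by
  have h : (⟪β, β⟫ : ℝ) ≠ 0 := inner_self_ne_zero.mpr hβ
  unfold reflVec
  rw [inner_sub_left, real_inner_smul_left, sub_sub, ← add_smul]
  have : (2 * ⟪v, β⟫ / ⟪β, β⟫ + 2 * (⟪v, β⟫ - 2 * ⟪v, β⟫ / ⟪β, β⟫ * ⟪β, β⟫) / ⟪β, β⟫ : ℝ) = 0 := by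
    field_simp
    ring
  rw [this, zero_smul, sub_zero]

theorem aux_reflPow_invol (b : Bool) (β v : V) (hβ : β ≠ 0) :
    reflPow b β (reflPow b β v) = v := by
  cases b
  · simp [reflPow]
  · simpa [reflPow] using aux_reflVec_invol β v hβ

theorem aux_reflPow_smul (b : Bool) (β v : V) (c : ℝ) :
    reflPow b β (c • v) = c • reflPow b β v := by
  cases b
  · simp [reflPow]
  · simp only [reflPow, reflVec, if_true, real_inner_smul_left, smul_sub, smul_smul]
    congr 2
    ring

theorem aux_reflPow_mem (b : Bool) (β v : V) (W : Submodule ℝ V) (hβ : β ∈ W) (hv : v ∈ W) :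
    reflPow b β v ∈ W := by
  cases b
  · simpa [reflPow] using hv
  · simp only [reflPow, reflVec, if_true]
    exact W.sub_mem hv (W.smul_mem _ hβ)

section aux
variable {κ : Type*} (b : κ → Bool) (β : κ → V)

theorem aux_fold_smul (l : List κ) (c : ℝ) (v : V) :
    l.foldl (fun v k => reflPow (b k) (β k) v) (c • v)
      = c • l.foldl (fun v k => reflPow (b k) (β k) v) v := by
  induction l generalizing v with
  | nil => rfl
  | cons a l ih => simp only [List.foldl_cons, aux_reflPow_smul, ih]

theorem aux_fold_inj (hβ : ∀ k, β k ≠ 0) (l : List κ) (u v : V)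
    (h : l.foldl (fun v k => reflPow (b k) (β k) v) u
      = l.foldl (fun v k => reflPow (b k) (β k) v) v) : u = v := by
  induction l generalizing u v with
  | nil => exact h
  | cons a l ih =>
    have h2 := congrArg (reflPow (b a) (β a)) (ih _ _ h)
    rwa [aux_reflPow_invol _ _ _ (hβ a), aux_reflPow_invol _ _ _ (hβ a)] at h2

theorem aux_fold_mem (W : Submodule ℝ V) (l : List κ) (hl : ∀ k ∈ l, β k ∈ W) (v : V)
    (hv : v ∈ W) : l.foldl (fun v k => reflPow (b k) (β k) v) v ∈ W := by
  induction l generalizing v with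
  | nil => exact hv
  | cons a l ih =>
    exact ih (fun k hk => hl k (by simp [hk])) _ (aux_reflPow_mem _ _ _ W (hl a (by simp)) hv)

theorem aux_fold_false (l : List κ) (v : V) :
    l.foldl (fun v k => reflPow false (β k) v) v = v := by
  induction l generalizing v with
  | nil => rfl
  | cons a l ih => simp only [List.foldl_cons, ih]; simp [reflPow]

end aux

theorem aux_filter_split {d : ℕ} (l : List (Fin d)) (hl : l.Pairwise (· < ·)) (p m : Fin d)
    (hpm : p < m) :
    l.filter (fun k => decide (p ≤ k))
      = l.filter (fun k => decide (p ≤ k ∧ k < m)) ++ l.filter (fun k => decide (m ≤ k)) := by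
  induction l with
  | nil => rfl
  | cons a l ih =>
    rw [List.pairwise_cons] at hl
    have ih := ih hl.2
    by_cases ham : a < m
    · have h2 : ¬ m ≤ a := not_le.mpr ham
      by_cases hp : p ≤ a
      · simp [List.filter_cons, ham, hp, h2] at ih ⊢
        exact ih
      · simp [List.filter_cons, hp, h2] at ih ⊢
        exact ih
    · have h2 : m ≤ a := not_lt.mp ham
      have hp : p ≤ a := hpm.le.trans h2
      have h3 : l.filter (fun k => decide (p ≤ k ∧ k < m)) = [] := by
        rw [List.filter_eq_nil_iff]
        intro k hk
        have := hl.1 k hk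
        simp only [decide_eq_true_eq]
        intro h
        exact absurd (h.2.trans_le h2) this.not_gt
      rw [h3] at ih
      rw [List.filter_cons_of_pos (by simpa using hp), List.filter_cons_of_neg (by simp [ham]),
        List.filter_cons_of_pos (by simpa using h2), h3, ih]
      rfl

theorem aux_key {r d : ℕ} (α : Fin r → V) (hα : ∀ k, α k ≠ 0)
    (hli : LinearIndependent ℝ α) (i : Fin d → Fin r) (hi : Function.Injective i)
    (ε : Fin d → Bool) (p m : Fin d) (hpm : p < m) :
    ¬ CollinearPair (bsWeight α i ε p) (bsWeight α i ε m) := by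
  unfold bsWeight
  rw [aux_filter_split _ (List.pairwise_lt_finRange d) p m hpm, List.foldl_append]
  set W : Submodule ℝ V := Submodule.span ℝ (Set.image α {j | j ≠ i m}) with hW
  have hmem : ∀ k, k < m → α (i k) ∈ W := fun k hk =>
    Submodule.subset_span ⟨i k, fun h => hk.ne (hi h), rfl⟩
  have hnot : α (i m) ∉ W := hli.notMem_span_image (by simp)
  have hu : ((List.finRange d).filter (fun k => decide (p ≤ k ∧ k < m))).foldl
      (fun v k => reflPow (ε k) (α (i k)) v) (α (i p)) ∈ W := by
    refine aux_fold_mem ε (fun k => α (i k)) W _ ?_ _ (hmem p hpm)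
    intro k hk
    simp only [List.mem_filter, decide_eq_true_eq] at hk
    exact hmem k hk.2.2
  have hu0 : ((List.finRange d).filter (fun k => decide (p ≤ k ∧ k < m))).foldl
      (fun v k => reflPow (ε k) (α (i k)) v) (α (i p)) ≠ 0 := by
    intro h
    refine hα (i p) (aux_fold_inj ε (fun k => α (i k)) (fun k => hα _) _ _ _ (h.trans ?_))
    have := aux_fold_smul ε (fun k => α (i k))
      ((List.finRange d).filter (fun k => decide (p ≤ k ∧ k < m))) 0 0
    simp only [zero_smul] at this
    exact this.symm
  generalize ((List.finRange d).filter (fun k => decide (p ≤ k ∧ k < m))).foldl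
      (fun v k => reflPow (ε k) (α (i k)) v) (α (i p)) = u at hu hu0
  rintro (⟨c, hc⟩ | ⟨c, hc⟩)
  · rw [← aux_fold_smul ε (fun k => α (i k))] at hc
    have h := aux_fold_inj ε (fun k => α (i k)) (fun k => hα _) _ _ _ hc
    have hc0 : c ≠ 0 := by
      rintro rfl
      exact hu0 (by simpa using h)
    rw [h] at hu
    exact hnot ((W.smul_mem_iff hc0).mp hu)
  · rw [← aux_fold_smul ε (fun k => α (i k))] at hc
    have h := aux_fold_inj ε (fun k => α (i k)) (fun k => hα _) _ _ _ hc
    exact hnot (h ▸ W.smul_mem c hu)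

/-- The Bott–Samelson space `BS^I` is of GKM type (the weights at each fixed point are
pairwise non-collinear) if and only if the letters of the word `I` are pairwise distinct. -/
theorem bs_gkm_iff_injective {r d : ℕ} (α : Fin r → V) (hα : ∀ k, α k ≠ 0)
    (hli : LinearIndependent ℝ α) (i : Fin d → Fin r) :
    Function.Injective i ↔
      ∀ ε : Fin d → Bool, ∀ ℓ m : Fin d, ℓ ≠ m →
        ¬ CollinearPair (bsWeight α i ε ℓ) (bsWeight α i ε m) := by
  constructor
  · intro hi ε ℓ m hne
    rcases lt_or_gt_of_ne hne with h | h
    · exact aux_key α hα hli i hi ε ℓ m h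
    · intro hc
      exact aux_key α hα hli i hi ε m ℓ h hc.symm
  · intro H a b hab
    by_contra hne
    refine H (fun _ => false) a b hne (Or.inl ⟨1, ?_⟩)
    unfold bsWeight
    rw [aux_fold_false (fun k => α (i k)), aux_fold_false (fun k => α (i k)), hab, one_smul]
end

section
/- Let I = [i_1, …, i_d] be a word with letters in {1, …, r} and let ξ ∈ V satisfy ⟨w_m(ε), ξ⟩ ≠ 0 for every ε ∈ {0,1}^d and every 1 ≤ m ≤ d. Define a relation on {0,1}^d by: ε → ε' if and only if ε and ε' differ in exactly one position m and ⟨w_m(ε), ξ⟩ > 0 (the ascending orientation of the edges of the graph Γ_I). Then the resulting directed graph is acyclic: there is no sequence ε^0 → ε^1 → ⋯ → ε^k with k ≥ 1 and ε^k = ε^0; equivalently, the transitive closure of the relation → is irreflexive. -/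
open scoped RealInnerProductSpace

variable {V : Type*} [NormedAddCommGroup V] [InnerProductSpace ℝ V]

/-- The ascending-edge relation on the vertices of the graph `Γ_I` determined by a
polarizing vector `ξ`: `ε → ε'` iff they differ in exactly one position `m` and
`⟨w_m(ε), ξ⟩ > 0`. -/
noncomputable def Ascends {r d : ℕ} (α : Fin r → V) (i : Fin d → Fin r) (ξ : V)
    (ε ε' : Fin d → Bool) : Prop :=
  ∃ m : Fin d, ε m ≠ ε' m ∧ (∀ k, k ≠ m → ε k = ε' k) ∧ 0 < ⟪bsWeight α i ε m, ξ⟫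

theorem reflPow_neg (b : Bool) (β v : V) : reflPow b β (-v) = -reflPow b β v := by
  unfold reflPow reflVec
  split
  · rw [inner_neg_left, mul_neg, neg_div, neg_smul]
    abel
  · rfl

theorem reflVec_self (β : V) (h : β ≠ 0) : reflVec β β = -β := by
  have h1 : (⟪β, β⟫ : ℝ) ≠ 0 := inner_self_ne_zero.mpr h
  unfold reflVec
  rw [mul_div_assoc, div_self h1, mul_one, two_smul]
  abel

theorem foldl_reflPow_neg {r d : ℕ} (α : Fin r → V) (i : Fin d → Fin r)
    (ε : Fin d → Bool) (l : List (Fin d)) : ∀ v : V,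
    l.foldl (fun v k => reflPow (ε k) (α (i k)) v) (-v)
      = -l.foldl (fun v k => reflPow (ε k) (α (i k)) v) v := by
  induction l with
  | nil => intro v; rfl
  | cons a l ih => intro v; simp only [List.foldl_cons, reflPow_neg, ih]

theorem foldl_reflPow_congr {r d : ℕ} (α : Fin r → V) (i : Fin d → Fin r)
    (ε ε' : Fin d → Bool) (l : List (Fin d)) (h : ∀ k ∈ l, ε k = ε' k) : ∀ v : V,
    l.foldl (fun v k => reflPow (ε k) (α (i k)) v) v
      = l.foldl (fun v k => reflPow (ε' k) (α (i k)) v) v := by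
  induction l with
  | nil => intro v; rfl
  | cons a l ih =>
    intro v
    simp only [List.foldl_cons]
    rw [h a (by simp), ih (fun k hk => h k (by simp [hk]))]

theorem filter_le_eq_cons {d : ℕ} (m : Fin d) (l : List (Fin d)) (hl : l.Pairwise (· < ·))
    (hm : m ∈ l) :
    l.filter (fun k => decide (m ≤ k)) = m :: l.filter (fun k => decide (m < k)) := by
  induction l with
  | nil => simp at hm
  | cons a l ih =>
    rw [List.pairwise_cons] at hl
    rcases List.mem_cons.mp hm with rfl | hm'
    · have : l.filter (fun k => decide (m ≤ k)) = l.filter (fun k => decide (m < k)) := by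
        apply List.filter_congr
        intro k hk
        simp [hl.1 k hk, (hl.1 k hk).le]
      simp [this]
    · have := hl.1 m hm'
      rw [List.filter_cons_of_neg (by simpa using this),
        List.filter_cons_of_neg (by simpa using this.le), ih hl.2 hm']

theorem bsWeight_eq {r d : ℕ} (α : Fin r → V) (i : Fin d → Fin r)
    (ε : Fin d → Bool) (m : Fin d) : bsWeight α i ε m =
    ((List.finRange d).filter (fun k => decide (m < k))).foldl
      (fun v k => reflPow (ε k) (α (i k)) v) (reflPow (ε m) (α (i m)) (α (i m))) := by
  unfold bsWeight
  rw [filter_le_eq_cons m _ (List.pairwise_lt_finRange d) (List.mem_finRange m), List.foldl_cons]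

theorem bsWeight_congr {r d : ℕ} (α : Fin r → V) (i : Fin d → Fin r)
    (ε ε' : Fin d → Bool) (m : Fin d) (h : ∀ k, m ≤ k → ε k = ε' k) :
    bsWeight α i ε m = bsWeight α i ε' m := by
  unfold bsWeight
  apply foldl_reflPow_congr
  intro k hk
  exact h k (by simpa using hk)

theorem bsWeight_flip {r d : ℕ} (α : Fin r → V) (hα : ∀ k, α k ≠ 0) (i : Fin d → Fin r)
    (ε ε' : Fin d → Bool) (m : Fin d) (hm : ε m ≠ ε' m) (h : ∀ k, m < k → ε k = ε' k) :
    bsWeight α i ε' m = -bsWeight α i ε m := by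
  rw [bsWeight_eq, bsWeight_eq, ← foldl_reflPow_neg,
    foldl_reflPow_congr α i ε ε' _ (fun k hk => h k (by simpa using hk))]
  congr 1
  have := reflVec_self (α (i m)) (hα _)
  unfold reflPow
  cases h1 : ε m <;> cases h2 : ε' m <;> simp_all

/-- For a polarizing vector `ξ`, orienting all edges of `Γ_I` as ascending edges yields an
acyclic directed graph: the transitive closure of the ascending-edge relation is
irreflexive. -/
theorem bs_ascending_orientation_acyclic {r d : ℕ} (α : Fin r → V) (hα : ∀ k, α k ≠ 0)
    (hli : LinearIndependent ℝ α) (i : Fin d → Fin r) (ξ : V)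
    (hξ : ∀ (ε : Fin d → Bool) (m : Fin d), ⟪bsWeight α i ε m, ξ⟫ ≠ 0) :
    Irreflexive (Relation.TransGen (Ascends α i ξ)) := by
  have key : ∀ a b, Relation.TransGen (Ascends α i ξ) a b → ∃ m : Fin d,
      (∀ k, m < k → ⟪bsWeight α i a k, ξ⟫ = ⟪bsWeight α i b k, ξ⟫) ∧
      0 < ⟪bsWeight α i a m, ξ⟫ ∧ ⟪bsWeight α i b m, ξ⟫ < 0 := by
    have step : ∀ a b, Ascends α i ξ a b → ∃ m : Fin d,
        (∀ k, m < k → ⟪bsWeight α i a k, ξ⟫ = ⟪bsWeight α i b k, ξ⟫) ∧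
        0 < ⟪bsWeight α i a m, ξ⟫ ∧ ⟪bsWeight α i b m, ξ⟫ < 0 := by
      rintro a b ⟨m, hm, hk, hpos⟩
      refine ⟨m, fun k hmk => ?_, hpos, ?_⟩
      · rw [bsWeight_congr α i a b k (fun l hl => hk l (lt_of_lt_of_le hmk hl).ne')]
      · rw [bsWeight_flip α hα i a b m hm (fun k h => hk k h.ne'), inner_neg_left]
        linarith
    intro a b hab
    induction hab with
    | single h => exact step _ _ h
    | tail _ h ih =>
      obtain ⟨m, h1, h2, h3⟩ := ih
      obtain ⟨n, g1, g2, g3⟩ := step _ _ h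
      rcases lt_trichotomy m n with hmn | rfl | hmn
      · exact ⟨n, fun k hk => (h1 k (hmn.trans hk)).trans (g1 k hk), by rw [h1 n hmn]; exact g2, g3⟩
      · linarith
      · exact ⟨m, fun k hk => (h1 k hk).trans (g1 k (hmn.trans hk)), h2, by rw [← g1 m hmn]; exact h3⟩
  intro a ha
  obtain ⟨m, _, h2, h3⟩ := key a a ha
  linarith
end

section
/- Let I = [i_1, …, i_d] be a word with letters in {1, …, r}, let j ∈ {1, …, r}, and let I' = [i_1, …, i_d, j] be the word obtained by appending the letter j. If f ∈ A(Γ_{I'}) is an assignment for Γ_{I'}, then the map ε ↦ f(ε, 0) and the map ε ↦ s_j(f(ε, 1)) (for ε ∈ {0,1}^d) both belong to A(Γ_I). -/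
open MvPolynomial

/-- The `ℝ`-algebra automorphism `s_j` of `S = ℝ[x_1, …, x_r]` determined by
`s_j(x_i) = x_i - c_{ji}·x_j`. -/
noncomputable def sRefl {r : ℕ} (c : Fin r → Fin r → ℝ) (j : Fin r) :
    MvPolynomial (Fin r) ℝ →ₐ[ℝ] MvPolynomial (Fin r) ℝ :=
  aeval (fun i => X i - C (c j i) * X j)

/-- `s_j^b`: `s_j` if `b = true`, the identity otherwise. -/
noncomputable def sReflPow {r : ℕ} (c : Fin r → Fin r → ℝ) (b : Bool) (j : Fin r)
    (p : MvPolynomial (Fin r) ℝ) : MvPolynomial (Fin r) ℝ :=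
  if b then sRefl c j p else p

/-- The weight-polynomial at position `m` of the vertex `ε` of the graph `Γ_I` for the
word `i : Fin d → Fin r`:  `w_m(ε) = s_{i_d}^{ε_d} ∘ ⋯ ∘ s_{i_m}^{ε_m}(α_{i_m})`, where
`α_i = x_i`. -/
noncomputable def bsWeightP {r : ℕ} (c : Fin r → Fin r → ℝ) {d : ℕ} (i : Fin d → Fin r)
    (ε : Fin d → Bool) (m : Fin d) : MvPolynomial (Fin r) ℝ :=
  ((List.finRange d).filter (fun k => decide (m ≤ k))).foldl
    (fun p k => sReflPow c (ε k) (i k) p) (X (i m))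

/-- An assignment for the graph `Γ_I`: a map `f : {0,1}^d → S` such that `w_m(ε)` divides
`f(ε) - f(ε')` for every pair of vertices `ε, ε'` differing in exactly the position `m`. -/
def IsAssignment {r : ℕ} (c : Fin r → Fin r → ℝ) {d : ℕ} (i : Fin d → Fin r)
    (f : (Fin d → Bool) → MvPolynomial (Fin r) ℝ) : Prop :=
  ∀ ε ε' : Fin d → Bool, ∀ m : Fin d,
    ε m ≠ ε' m → (∀ k, k ≠ m → ε k = ε' k) → bsWeightP c i ε m ∣ f ε - f ε'

theorem sRefl_invol {r : ℕ} (c : Fin r → Fin r → ℝ) (hc : ∀ j, c j j = 2) (j : Fin r)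
    (p : MvPolynomial (Fin r) ℝ) : sRefl c j (sRefl c j p) = p := by
  have h : (sRefl c j).comp (sRefl c j) = AlgHom.id ℝ _ := by
    apply MvPolynomial.algHom_ext
    intro i
    have hC : ∀ a : ℝ, sRefl c j (C a) = C a := fun a => by simp [sRefl]
    have hX : ∀ i, sRefl c j (X i) = X i - C (c j i) * X j := fun i => by simp [sRefl]
    have h2 : (C (2 : ℝ) : MvPolynomial (Fin r) ℝ) = 2 := map_ofNat C 2
    simp only [AlgHom.comp_apply, AlgHom.id_apply, hX, map_sub, map_mul, hC, hc, h2]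
    ring
  exact DFunLike.congr_fun h p

theorem bsWeightP_snoc {r : ℕ} (c : Fin r → Fin r → ℝ) {d : ℕ} (i : Fin d → Fin r) (j : Fin r)
    (ε : Fin d → Bool) (b : Bool) (m : Fin d) :
    bsWeightP c (Fin.snoc i j : Fin (d + 1) → Fin r) (Fin.snoc ε b : Fin (d + 1) → Bool) m.castSucc
      = sReflPow c b j (bsWeightP c i ε m) := by
  unfold bsWeightP
  rw [List.finRange_succ_last, List.filter_append, List.foldl_append, List.filter_map,
    List.foldl_map]
  simp [Fin.le_last, Function.comp_def]

theorem snoc_edge {d : ℕ} {ε ε' : Fin d → Bool} {m : Fin d} (b : Bool)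
    (h : ∀ k, k ≠ m → ε k = ε' k) (k : Fin (d + 1)) (hk : k ≠ m.castSucc) :
    (Fin.snoc ε b : Fin (d + 1) → Bool) k = (Fin.snoc ε' b : Fin (d + 1) → Bool) k := by
  induction k using Fin.lastCases with
  | last => simp
  | cast k =>
    simp only [Fin.snoc_castSucc]
    exact h k (fun e => hk (by rw [e]))

/-- If `f` is an assignment for `Γ_{[I,j]}`, then the restriction `ε ↦ f(ε, 0)` to the
fiber over `[0]` and the twisted restriction `ε ↦ s_j(f(ε, 1))` to the fiber over `[j]`
are both assignments for `Γ_I`. -/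
theorem assignment_restrict_fibers {r : ℕ} (c : Fin r → Fin r → ℝ)
    (hc : ∀ j, c j j = 2) {d : ℕ} (i : Fin d → Fin r) (j : Fin r)
    (f : (Fin (d + 1) → Bool) → MvPolynomial (Fin r) ℝ)
    (hf : IsAssignment c (Fin.snoc i j) f) :
    IsAssignment c i (fun ε => f (Fin.snoc ε false)) ∧
    IsAssignment c i (fun ε => sRefl c j (f (Fin.snoc ε true))) := by
  have key : ∀ (b : Bool) (ε ε' : Fin d → Bool) (m : Fin d), ε m ≠ ε' m →
      (∀ k, k ≠ m → ε k = ε' k) →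
      sReflPow c b j (bsWeightP c i ε m) ∣ f (Fin.snoc ε b) - f (Fin.snoc ε' b) := by
    intro b ε ε' m h1 h2
    rw [← bsWeightP_snoc]
    exact hf _ _ m.castSucc (by simpa using h1) (snoc_edge b h2)
  refine ⟨fun ε ε' m h1 h2 => ?_, fun ε ε' m h1 h2 => ?_⟩
  · simpa [sReflPow] using key false ε ε' m h1 h2
  · have h := map_dvd (sRefl c j) (key true ε ε' m h1 h2)
    simpa [sReflPow, sRefl_invol c hc] using h
end

section
/- Let I = [i_1, …, i_d] be a word with letters in {1, …, r}, let j ∈ {1, …, r}, and let I' = [i_1, …, i_d, j]. Let {A_J}_{J ∈ T} be a finite family of elements of A(Γ_I) and let a_{J,0}, a_{J,1} ∈ S for each J ∈ T. Define η : {0,1}^{d+1} → S by η(ε, 0) = Σ_{J ∈ T} a_{J,0}·A_J(ε) and η(ε, 1) = Σ_{J ∈ T} a_{J,1}·s_j(A_J(ε)). Then η ∈ A(Γ_{I'}) if and only if for every ε ∈ {0,1}^d the polynomial x_j divides Σ_{J ∈ T} (a_{J,1} − a_{J,0})·A_J(ε). -/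
open MvPolynomial

theorem bsWeightP_castSucc {r : ℕ} (c : Fin r → Fin r → ℝ) {d : ℕ} (i : Fin d → Fin r)
    (j : Fin r) (ε : Fin (d + 1) → Bool) (m : Fin d) :
    bsWeightP c (Fin.snoc i j : Fin (d + 1) → Fin r) ε m.castSucc =
      sReflPow c (ε (Fin.last d)) j (bsWeightP c i (fun k => ε k.castSucc) m) := by
  have h : decide (m.castSucc ≤ Fin.last d) = true := by simpa using Fin.le_last _
  simp [bsWeightP, List.finRange_succ_last, List.filter_append, List.filter_map,
    List.foldl_map, Function.comp_def, h, Fin.le_last]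

theorem bsWeightP_last {r : ℕ} (c : Fin r → Fin r → ℝ) {d : ℕ} (i : Fin d → Fin r)
    (j : Fin r) (ε : Fin (d + 1) → Bool) :
    bsWeightP c (Fin.snoc i j : Fin (d + 1) → Fin r) ε (Fin.last d) =
      sReflPow c (ε (Fin.last d)) j (X j) := by
  have h : ∀ k : Fin d, ¬ (Fin.last d ≤ k.castSucc) := fun k => not_le.2 (Fin.castSucc_lt_last k)
  simp [bsWeightP, List.finRange_succ_last, List.filter_append, List.filter_map,
    List.foldl_map, Function.comp_def, h]

theorem X_dvd_sRefl_sub {r : ℕ} (c : Fin r → Fin r → ℝ) (j : Fin r)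
    (p : MvPolynomial (Fin r) ℝ) : X j ∣ sRefl c j p - p := by
  induction p using MvPolynomial.induction_on with
  | C a => simp [sRefl]
  | add p q hp hq =>
    have := dvd_add hp hq
    rw [map_add]
    convert this using 1
    ring
  | mul_X p n hp =>
    have e : sRefl c j (X n) = X n - C (c j n) * X j := by simp [sRefl]
    rw [map_mul, e]
    obtain ⟨q, hq⟩ := hp
    exact ⟨q * X n - sRefl c j p * C (c j n), by linear_combination X n * hq⟩

theorem sReflPow_X_dvd {r : ℕ} (c : Fin r → Fin r → ℝ) (hc : ∀ j, c j j = 2) (j : Fin r)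
    (b : Bool) (p : MvPolynomial (Fin r) ℝ) : sReflPow c b j (X j) ∣ p ↔ X j ∣ p := by
  cases b
  · simp [sReflPow]
  · have e : sRefl c j (X j) = - X j := by
      have h2 : (C (2 : ℝ) : MvPolynomial (Fin r) ℝ) = 2 := map_ofNat C 2
      simp only [sRefl, aeval_X, hc, h2]
      ring
    simp [sReflPow, e]

theorem X_dvd_key {r : ℕ} (c : Fin r → Fin r → ℝ) (j : Fin r) {T : Type*} [Fintype T]
    (B a₀ a₁ : T → MvPolynomial (Fin r) ℝ) :
    X j ∣ ∑ J, a₁ J * sRefl c j (B J) - ∑ J, a₀ J * B J ↔ X j ∣ ∑ J, (a₁ J - a₀ J) * B J := by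
  have e : ∑ J, a₁ J * sRefl c j (B J) - ∑ J, a₀ J * B J =
      ∑ J, a₁ J * (sRefl c j (B J) - B J) + ∑ J, (a₁ J - a₀ J) * B J := by
    rw [← Finset.sum_sub_distrib, ← Finset.sum_add_distrib]
    exact Finset.sum_congr rfl fun J _ => by ring
  rw [e]
  exact dvd_add_right (Finset.dvd_sum fun J _ => (X_dvd_sRefl_sub c j (B J)).mul_left _)

/-- Let `{A_J}` be a finite family of assignments for `Γ_I`, and define
`η(ε,0) = Σ a_{J,0}·A_J(ε)` and `η(ε,1) = Σ a_{J,1}·s_j(A_J(ε))`.  Then `η` is an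
assignment for `Γ_{[I,j]}` if and only if `x_j` divides `Σ (a_{J,1} - a_{J,0})·A_J(ε)`
for every vertex `ε` of `Γ_I`. -/
theorem assignment_extension_iff {r : ℕ} (c : Fin r → Fin r → ℝ)
    (hc : ∀ j, c j j = 2) {d : ℕ} (i : Fin d → Fin r) (j : Fin r)
    {T : Type*} [Fintype T]
    (A : T → (Fin d → Bool) → MvPolynomial (Fin r) ℝ)
    (hA : ∀ J, IsAssignment c i (A J))
    (a₀ a₁ : T → MvPolynomial (Fin r) ℝ) :
    IsAssignment c (Fin.snoc i j)
      (fun εh =>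
        if εh (Fin.last d) then
          ∑ J, a₁ J * sRefl c j (A J fun k => εh k.castSucc)
        else
          ∑ J, a₀ J * A J fun k => εh k.castSucc) ↔
      ∀ ε : Fin d → Bool, X j ∣ ∑ J, (a₁ J - a₀ J) * A J ε := by
  constructor
  · intro h ε
    have := h (Fin.snoc ε true) (Fin.snoc ε false) (Fin.last d) (by simp) (by
      intro k hk
      induction k using Fin.lastCases with
      | last => exact absurd rfl hk
      | cast k => simp)
    rw [bsWeightP_last, sReflPow_X_dvd c hc] at this
    simp only [Fin.snoc_last, Fin.snoc_castSucc, if_true, Bool.false_eq_true, if_false] at this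
    exact (X_dvd_key c j (fun J => A J ε) a₀ a₁).1 this
  · intro h ε ε' m hm hk
    induction m using Fin.lastCases with
    | last =>
      rw [bsWeightP_last, sReflPow_X_dvd c hc]
      have e : (fun k : Fin d => ε' k.castSucc) = fun k => ε k.castSucc :=
        funext fun k => (hk _ (Fin.castSucc_lt_last k).ne).symm
      have key := (X_dvd_key c j (fun J => A J fun k => ε k.castSucc) a₀ a₁).2 (h _)
      simp only [e]
      cases h1 : ε (Fin.last d) <;> cases h2 : ε' (Fin.last d)
      · simp [h1, h2] at hm
      · simpa using (dvd_sub_comm.1 key)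
      · simpa using key
      · simp [h1, h2] at hm
    | cast m =>
      have hl : ε' (Fin.last d) = ε (Fin.last d) :=
        (hk _ (Fin.castSucc_lt_last m).ne').symm
      have hd := fun J => hA J (fun k => ε k.castSucc) (fun k => ε' k.castSucc) m hm
        (fun k hkm => hk _ (fun h => hkm (Fin.castSucc_injective _ h)))
      rw [bsWeightP_castSucc]
      simp only [hl]
      cases h1 : ε (Fin.last d)
      · simp only [sReflPow, Bool.false_eq_true, if_false, ← Finset.sum_sub_distrib, ← mul_sub]
        exact Finset.dvd_sum fun J _ => (hd J).mul_left _
      · simp only [sReflPow, if_true, ← Finset.sum_sub_distrib, ← mul_sub, ← map_sub]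
        exact Finset.dvd_sum fun J _ => (map_dvd (sRefl c j) (hd J)).mul_left _
end

section
/- The S-module A(Γ_{[2,1]}) is a free S-module with basis the following four assignments, where the values are listed at the vertices (00, 20, 01, 21) in this order: (1, 1, 1, 1), (0, x_2, 0, x_1 + x_2), (0, 0, x_1, x_1), and (0, 0, 0, x_1(x_1 + x_2)). That is, each of these four maps is an assignment, they are S-linearly independent, and every assignment for Γ_{[2,1]} is an S-linear combination of them. -/
open MvPolynomial

/-- The polynomial ring `S = ℝ[x_1, x_2]`. -/
noncomputable abbrev S2 : Type := MvPolynomial (Fin 2) ℝ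

/-- `x_1`. -/
noncomputable def x₁ : S2 := X 0
/-- `x_2`. -/
noncomputable def x₂ : S2 := X 1

/-- An assignment for the graph `Γ_{[2,1]}` in type `A_2`.  Vertices are pairs
`(b₁, b₂) : Bool × Bool`, where `00 = (false, false)`, `20 = (true, false)`,
`01 = (false, true)`, `21 = (true, true)`.  The edges and labels are:
`00–20` with label `x_2`, `01–21` with label `x_1 + x_2`, and `00–01`, `20–21`
each with label `x_1`. -/
def IsAsgn21 (f : Bool × Bool → S2) : Prop :=
  (x₂ ∣ f (false, false) - f (true, false)) ∧
  ((x₁ + x₂) ∣ f (false, true) - f (true, true)) ∧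
  (x₁ ∣ f (false, false) - f (false, true)) ∧
  (x₁ ∣ f (true, false) - f (true, true))

/-- The four claimed basis assignments, with values at `(00, 20, 01, 21)` given by
`(1,1,1,1)`, `(0, x₂, 0, x₁+x₂)`, `(0, 0, x₁, x₁)` and `(0, 0, 0, x₁(x₁+x₂))`. -/
noncomputable def B21 : Fin 4 → (Bool × Bool → S2) :=
  ![fun _ => 1,
    fun v => if v.1 then (if v.2 then x₁ + x₂ else x₂) else 0,
    fun v => if v.2 then x₁ else 0,
    fun v => if v.1 then (if v.2 then x₁ * (x₁ + x₂) else 0) else 0]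

/-- The `S`-module `A(Γ_{[2,1]})` of assignments is free with basis `B21`: each `B21 k`
is an assignment, they are `S`-linearly independent, and every assignment is an
`S`-linear combination of them. -/
theorem asgn21_free_basis :
    (∀ k : Fin 4, IsAsgn21 (B21 k)) ∧
    LinearIndependent S2 B21 ∧
    (∀ f : Bool × Bool → S2, IsAsgn21 f →
      ∃ a : Fin 4 → S2, f = fun v => ∑ k, a k * B21 k v) := by
  have e0 : B21 0 = fun _ => 1 := rfl
  have e1 : B21 1 = fun v => if v.1 then (if v.2 then x₁ + x₂ else x₂) else 0 := rfl
  have e2 : B21 2 = fun v => if v.2 then x₁ else 0 := rfl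
  have e3 : B21 3 = fun v => if v.1 then (if v.2 then x₁ * (x₁ + x₂) else 0) else 0 := rfl
  have h1 : x₁ ≠ 0 := X_ne_zero 0
  have h2 : x₂ ≠ 0 := X_ne_zero 1
  have h12 : x₁ + x₂ ≠ 0 := by
    intro h
    have := congrArg (MvPolynomial.eval (fun _ => (1 : ℝ))) h
    simp [x₁, x₂] at this
  have hp : Prime x₁ := MvPolynomial.X_prime
  have hnd : ¬ x₁ ∣ x₂ := by
    rintro ⟨c, hc⟩
    have := congrArg (MvPolynomial.eval (![0, 1] : Fin 2 → ℝ)) hc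
    simp [x₁, x₂] at this
  refine ⟨?_, ?_, ?_⟩
  · intro k
    fin_cases k
    · change IsAsgn21 (B21 0)
      simp [IsAsgn21, e0]
    · change IsAsgn21 (B21 1)
      simp [IsAsgn21, e1]
      exact ⟨-1, by ring⟩
    · change IsAsgn21 (B21 2)
      simp [IsAsgn21, e2]
    · change IsAsgn21 (B21 3)
      simp [IsAsgn21, e3]
  · rw [Fintype.linearIndependent_iff]
    intro g hg
    have g00 := congrFun hg (false, false)
    have g20 := congrFun hg (true, false)
    have g01 := congrFun hg (false, true)
    have g21 := congrFun hg (true, true)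
    simp [Fin.sum_univ_four, e0, e1, e2, e3] at g00 g20 g01 g21
    simp [g00, h2] at g20
    simp [g00, h1] at g01
    simp [g00, g20, g01, h1, h12] at g21
    intro i
    fin_cases i <;> assumption
  · rintro f ⟨⟨p, hp1⟩, ⟨q, hq⟩, ⟨r, hr⟩, ⟨t, ht⟩⟩
    have hd : x₁ ∣ x₂ * (p - q) := ⟨q + r - t, by linear_combination hq + hr - hp1 - ht⟩
    obtain ⟨c, hc⟩ := (hp.dvd_or_dvd hd).resolve_left hnd
    refine ⟨![f (false, false), -p, -r, c], ?_⟩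
    funext ⟨a, b⟩
    cases a <;> cases b <;> simp [Fin.sum_univ_four, e0, e1, e2, e3]
    · linear_combination -hr
    · linear_combination -hp1
    · linear_combination -hr - hq + (x₁ + x₂) * hc
end

section
/- Let A be the 4×4 matrix over S = ℝ[x_1, x_2] given by A = [[1, 0, 0, 0], [1, x_2, 0, 0], [1, 0, x_1, 0], [1, x_1 + x_2, x_1, x_1(x_1 + x_2)]]. Then the set of column vectors Δ ∈ S^4 such that x_2 divides every entry of the product A·Δ is exactly {x_2·u + t·(0, −x_1, 0, 1) : u ∈ S^4, t ∈ S}. -/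
open MvPolynomial

/-- The matrix `A` recording the basis of assignments for `Γ_{[2,1]}` in type `A_2`. -/
noncomputable def A21 : Matrix (Fin 4) (Fin 4) S2 :=
  !![1, 0, 0, 0;
     1, x₂, 0, 0;
     1, 0, x₁, 0;
     1, x₁ + x₂, x₁, x₁ * (x₁ + x₂)]

theorem x₂_dvd_of_dvd_x₁_mul {p : S2} (h : x₂ ∣ x₁ * p) : x₂ ∣ p := by
  have hp : Prime x₂ := by
    unfold x₂
    exact MvPolynomial.X_prime
  rcases hp.dvd_or_dvd h with h1 | h1
  · exfalso
    unfold x₁ x₂ at h1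
    rw [MvPolynomial.X_dvd_X] at h1
    simp at h1
  · exact h1

/-- The set of column vectors `Δ ∈ S⁴` with `A·Δ ≡ 0 (mod x₂)` is exactly
`{x₂·u + t·(0, −x₁, 0, 1) : u ∈ S⁴, t ∈ S}`. -/
theorem congruence_system_solutions :
    {Δ : Fin 4 → S2 | ∀ idx : Fin 4, x₂ ∣ A21.mulVec Δ idx} =
      {Δ : Fin 4 → S2 | ∃ (u : Fin 4 → S2) (t : S2),
        Δ = x₂ • u + t • ![0, -x₁, 0, 1]} := by
  ext Δ
  simp only [Set.mem_ofPred_eq]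
  constructor
  · intro h
    have h0 := h 0
    have h2 := h 2
    have h3 := h 3
    simp [A21, Matrix.mulVec, dotProduct, Fin.sum_univ_four] at h0 h2 h3
    have hc : x₂ ∣ Δ 2 := x₂_dvd_of_dvd_x₁_mul ((dvd_add_right h0).mp h2)
    obtain ⟨a, ha⟩ := h0
    obtain ⟨c, hc⟩ := hc
    obtain ⟨e, he⟩ := h3
    have hb : x₂ ∣ Δ 1 + x₁ * Δ 3 := by
      apply x₂_dvd_of_dvd_x₁_mul
      refine ⟨e - a - Δ 1 - x₁ * c - x₁ * Δ 3, ?_⟩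
      linear_combination he - ha - x₁ * hc
    obtain ⟨b, hb⟩ := hb
    refine ⟨![a, b, c, 0], Δ 3, ?_⟩
    funext i
    fin_cases i
    · simp [ha]
    · simp
      linear_combination hb
    · simp [hc]
    · simp
  · rintro ⟨u, t, rfl⟩ i
    fin_cases i
    · simp [A21, Matrix.mulVec, dotProduct, Fin.sum_univ_four]
    · simp [A21, Matrix.mulVec, dotProduct, Fin.sum_univ_four]
      exact ⟨u 0 + (x₂ * u 1 + -(t * x₁)), by ring⟩
    · simp [A21, Matrix.mulVec, dotProduct, Fin.sum_univ_four]
      exact ⟨u 0 + x₁ * u 2, by ring⟩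
    · simp [A21, Matrix.mulVec, dotProduct, Fin.sum_univ_four]
      exact ⟨u 0 + (x₁ + x₂) * u 1 + x₁ * u 2 + x₁ * (x₁ + x₂) * u 3, by ring⟩
end

section
/- The S-module A(Γ_{[2,1,2]}) is a free S-module of rank 8, with basis the eight columns of the following 8×8 matrix, whose rows list values at the vertices (000, 200, 010, 210, 002, 202, 012, 212) in this order: [[1,0,0,0,0,0,0,0], [1, x_2, 0, 0, 0, 0, 0, 0], [1, 0, x_1, 0, 0, 0, 0, 0], [1, x_1 + x_2, x_1, x_1(x_1 + x_2), 0, 0, 0, 0], [1, 0, 0, 0, x_2, 0, 0, 0], [1, −x_2, 0, 0, x_2, −x_2², 0, x_1 x_2], [1, 0, x_1 + x_2, 0, x_2, 0, x_2(x_1 + x_2), 0], [1, x_1, x_1 + x_2, x_1(x_1 + x_2), x_2, x_1 x_2, x_2(x_1 + x_2), x_1 x_2]]. That is, each column is an assignment for Γ_{[2,1,2]}, the columns are S-linearly independent, and every assignment is an S-linear combination of them. -/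
open MvPolynomial

/-- Vertices of the graph `Γ_{[2,1,2]}`: triples `(ε₁, ε₂, ε₃)`, written as subwords
`000 = (0,0,0)`, `200 = (1,0,0)`, `010 = (0,1,0)`, `210 = (1,1,0)`, `002 = (0,0,1)`,
`202 = (1,0,1)`, `012 = (0,1,1)`, `212 = (1,1,1)`. -/
abbrev V3 : Type := Bool × Bool × Bool

/-- Label of an edge of `Γ_{[2,1,2]}` whose endpoints differ at position 1:
`s₂^{ε₃} s₁^{ε₂}(α₂)`, i.e. `x₂`, `x₁ + x₂`, `−x₂`, `x₁` as `(ε₂, ε₃)` runs over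
`(0,0)`, `(1,0)`, `(0,1)`, `(1,1)`. -/
noncomputable def lab1 (e₂ e₃ : Bool) : S2 :=
  if e₃ then (if e₂ then x₁ else -x₂) else (if e₂ then x₁ + x₂ else x₂)

/-- Label of an edge of `Γ_{[2,1,2]}` whose endpoints differ at position 2:
`s₂^{ε₃}(α₁)`, i.e. `x₁` if `ε₃ = 0` and `x₁ + x₂` if `ε₃ = 1`. -/
noncomputable def lab2 (e₃ : Bool) : S2 := if e₃ then x₁ + x₂ else x₁

/-- An assignment for the graph `Γ_{[2,1,2]}` in type `A_2`: a map `f : {0,1}³ → S` such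
that the label of each edge divides the difference of the values of `f` at its two
endpoints (edges whose endpoints differ at position 3 are labeled `α₂ = x₂`). -/
def IsAsgn212 (f : V3 → S2) : Prop :=
  (∀ e₂ e₃ : Bool, lab1 e₂ e₃ ∣ f (false, e₂, e₃) - f (true, e₂, e₃)) ∧
  (∀ e₁ e₃ : Bool, lab2 e₃ ∣ f (e₁, false, e₃) - f (e₁, true, e₃)) ∧
  (∀ e₁ e₂ : Bool, x₂ ∣ f (e₁, e₂, false) - f (e₁, e₂, true))

/-- Index of a vertex of `Γ_{[2,1,2]}` in the order
`000, 200, 010, 210, 002, 202, 012, 212`. -/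
def vIdx : V3 → Fin 8 := fun v =>
  (if v.1 then 1 else 0) + (if v.2.1 then 2 else 0) + (if v.2.2 then 4 else 0)

/-- The `8×8` matrix whose rows list the values of the eight basis assignments at the
vertices `000, 200, 010, 210, 002, 202, 012, 212` (in this order). -/
noncomputable def M212 : Matrix (Fin 8) (Fin 8) S2 :=
  !![1, 0, 0, 0, 0, 0, 0, 0;
     1, x₂, 0, 0, 0, 0, 0, 0;
     1, 0, x₁, 0, 0, 0, 0, 0;
     1, x₁ + x₂, x₁, x₁ * (x₁ + x₂), 0, 0, 0, 0;
     1, 0, 0, 0, x₂, 0, 0, 0;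
     1, -x₂, 0, 0, x₂, -x₂ ^ 2, 0, x₁ * x₂;
     1, 0, x₁ + x₂, 0, x₂, 0, x₂ * (x₁ + x₂), 0;
     1, x₁, x₁ + x₂, x₁ * (x₁ + x₂), x₂, x₁ * x₂, x₂ * (x₁ + x₂), x₁ * x₂]

/-- The `k`-th basis assignment: the `k`-th column of `M212`, viewed as a map on the
vertices of `Γ_{[2,1,2]}`. -/
noncomputable def B212 (k : Fin 8) : V3 → S2 := fun v => M212 (vIdx v) k


lemma x₁_ne : x₁ ≠ 0 := X_ne_zero 0
lemma x₂_ne : x₂ ≠ 0 := X_ne_zero 1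

lemma x₁x₂_ne : x₁ + x₂ ≠ 0 := by
  intro h
  have := congrArg (eval (fun _ => (1 : ℝ))) h
  simp [x₁, x₂] at this

lemma rel12 : IsRelPrime x₁ x₂ := by
  have hp : Prime x₁ := X_prime
  refine (hp.irreducible.isRelPrime_iff_not_dvd).2 ?_
  rintro ⟨c, hc⟩
  have := congrArg (eval (fun i : Fin 2 => if i = 0 then (0 : ℝ) else 1)) hc
  simp [x₁, x₂] at this

lemma rel1s : IsRelPrime x₁ (x₁ + x₂) := by
  intro d h1 h2
  exact rel12 h1 ((dvd_add_right h1).1 h2)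

lemma rel2s : IsRelPrime x₂ (x₁ + x₂) := by
  intro d h1 h2
  exact rel12 ((dvd_add_left h1).1 h2) h1

lemma B212_sum (a : Fin 8 → S2) :
    (∑ k, a k * B212 k (false, false, false) = a 0) ∧
    (∑ k, a k * B212 k (true, false, false) = a 0 + a 1 * x₂) ∧
    (∑ k, a k * B212 k (false, true, false) = a 0 + a 2 * x₁) ∧
    (∑ k, a k * B212 k (true, true, false) =
      a 0 + a 1 * (x₁ + x₂) + a 2 * x₁ + a 3 * (x₁ * (x₁ + x₂))) ∧
    (∑ k, a k * B212 k (false, false, true) = a 0 + a 4 * x₂) ∧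
    (∑ k, a k * B212 k (true, false, true) =
      a 0 - a 1 * x₂ + a 4 * x₂ - a 5 * x₂ ^ 2 + a 7 * (x₁ * x₂)) ∧
    (∑ k, a k * B212 k (false, true, true) =
      a 0 + a 2 * (x₁ + x₂) + a 4 * x₂ + a 6 * (x₂ * (x₁ + x₂))) ∧
    (∑ k, a k * B212 k (true, true, true) =
      a 0 + a 1 * x₁ + a 2 * (x₁ + x₂) + a 3 * (x₁ * (x₁ + x₂)) + a 4 * x₂
        + a 5 * (x₁ * x₂) + a 6 * (x₂ * (x₁ + x₂)) + a 7 * (x₁ * x₂)) := by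
  have e3 : (1 + 2 : Fin 8) = 3 := rfl
  have e5 : (1 + 4 : Fin 8) = 5 := rfl
  have e6 : (2 + 4 : Fin 8) = 6 := rfl
  have e7 : (3 + 4 : Fin 8) = 7 := rfl
  refine ⟨?_, ?_, ?_, ?_, ?_, ?_, ?_, ?_⟩ <;>
    simp [Fin.sum_univ_eight, B212, M212, vIdx, e3, e5, e6, e7] <;> try ring

lemma B212_asgn (k : Fin 8) : IsAsgn212 (B212 k) := by
  obtain ⟨h0, h1, h2, h3, h4, h5, h6, h7⟩ := B212_sum (Pi.single k 1)
  simp only [Pi.single_apply, ite_mul, one_mul, zero_mul, Finset.sum_ite_eq',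
    Finset.sum_ite_eq, Finset.mem_univ, if_true] at h0 h1 h2 h3 h4 h5 h6 h7
  refine ⟨?_, ?_, ?_⟩
  · rintro (_ | _) (_ | _) <;>
      simp only [lab1, h0, h1, h2, h3, h4, h5, h6, h7] <;> fin_cases k <;> simp
    · exact ⟨-1, by ring⟩
  · rintro (_ | _) (_ | _) <;>
      simp only [lab2, h0, h1, h2, h3, h4, h5, h6, h7] <;> fin_cases k <;> simp
    · exact ⟨-1, by ring⟩
    · exact ⟨-1, by ring⟩
    · exact ⟨-1, by ring⟩
    · exact ⟨-x₂, by ring⟩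
  · rintro (_ | _) (_ | _) <;>
      simp only [h0, h1, h2, h3, h4, h5, h6, h7] <;> fin_cases k <;> simp

lemma B212_indep : LinearIndependent S2 B212 := by
  rw [Fintype.linearIndependent_iff]
  intro a ha
  obtain ⟨h0, h1, h2, h3, h4, h5, h6, h7⟩ := B212_sum a
  have key : ∀ v, ∑ k, a k * B212 k v = 0 := fun v => by
    have := congrFun ha v
    simpa [Finset.sum_apply] using this
  rw [key] at h0 h1 h2 h3 h4 h5 h6 h7
  have n1 := x₁_ne
  have n2 := x₂_ne
  have ns := x₁x₂_ne
  have a0 : a 0 = 0 := h0.symm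
  have a1 : a 1 = 0 := by simpa [a0, n2] using h1.symm
  have a2 : a 2 = 0 := by simpa [a0, n1] using h2.symm
  have a3 : a 3 = 0 := by simpa [a0, a1, a2, n1, ns] using h3.symm
  have a4 : a 4 = 0 := by simpa [a0, n2] using h4.symm
  have a6 : a 6 = 0 := by simpa [a0, a2, a4, n2, ns] using h6.symm
  have h57 : a 5 + a 7 = 0 := by
    have : (a 5 + a 7) * (x₁ * x₂) = 0 := by
      rw [a0, a1, a2, a3, a4, a6] at h7
      linear_combination -h7
    simpa [n1, n2] using this
  have a5 : a 5 = 0 := by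
    have : a 5 * (x₂ * (x₁ + x₂)) = 0 := by
      rw [a0, a1, a4] at h5
      linear_combination h5 + x₁ * x₂ * h57
    simpa [n2, ns] using this
  have a7 : a 7 = 0 := by simpa [a5] using h57
  intro i
  fin_cases i <;> assumption

lemma B212_span (f : V3 → S2) (hf : IsAsgn212 f) :
    ∃ a : Fin 8 → S2, f = fun v => ∑ k, a k * B212 k v := by
  obtain ⟨hc, hd, he⟩ := hf
  obtain ⟨c1, hc1⟩ := hc false false
  obtain ⟨c2, hc2⟩ := hc true false
  obtain ⟨c4, hc4⟩ := hc true true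
  obtain ⟨d1, hd1⟩ := hd false false
  obtain ⟨d2, hd2⟩ := hd true false
  obtain ⟨d3, hd3⟩ := hd false true
  obtain ⟨d4, hd4⟩ := hd true true
  obtain ⟨e1, he1⟩ := he false false
  obtain ⟨e2, he2⟩ := he true false
  obtain ⟨e3, he3⟩ := he false true
  obtain ⟨e4, he4⟩ := he true true
  simp only [lab1, lab2, if_true, if_false, Bool.false_eq_true] at hc1 hc2 hc4 hd1 hd2 hd3 hd4
  obtain ⟨a3, h3⟩ : x₁ * (x₁ + x₂) ∣
      f (true, true, false) - f (false, false, false) + c1 * (x₁ + x₂) + d1 * x₁ :=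
    rel1s.mul_dvd ⟨c1 - d2 + d1, by linear_combination -hc1 - hd2⟩
      ⟨c1 - c2, by linear_combination -hd1 - hc2⟩
  obtain ⟨a6, h6⟩ : x₂ * (x₁ + x₂) ∣
      f (false, true, true) - f (false, false, false) + d1 * (x₁ + x₂) + e1 * x₂ :=
    rel2s.mul_dvd ⟨d1 + e1 - e3, by linear_combination -hd1 - he3⟩
      ⟨d1 - d3, by linear_combination -he1 - hd3⟩
  obtain ⟨q, hq⟩ : x₁ * x₂ ∣
      f (true, true, true) - f (false, false, false) + c1 * x₁ + d1 * (x₁ + x₂)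
        - a3 * (x₁ * (x₁ + x₂)) + e1 * x₂ - a6 * (x₂ * (x₁ + x₂)) :=
    rel12.mul_dvd ⟨-c4 + c1 - a3 * (x₁ + x₂), by linear_combination -hc4 + h6⟩
      ⟨-e4 - c1 + d1 + e1 - a6 * (x₁ + x₂), by linear_combination -he4 + h3⟩
  obtain ⟨p, hp⟩ : x₂ ∣ f (true, false, true) - f (false, false, false) - c1 * x₂ + e1 * x₂ :=
    ⟨-2 * c1 - e2 + e1, by linear_combination -hc1 - he2⟩
  obtain ⟨r, hr⟩ : x₁ + x₂ ∣ p - x₁ * q := by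
    refine rel2s.symm.dvd_of_dvd_mul_left (y := x₂) ?_
    exact ⟨d4 - c1 - d1 + a3 * x₁ + a6 * x₂, by linear_combination hd4 - hp + hq⟩
  refine ⟨![f (false, false, false), -c1, -d1, a3, -e1, -r, a6, q + r], ?_⟩
  obtain ⟨g0, g1, g2, g3, g4, g5, g6, g7⟩ :=
    B212_sum ![f (false, false, false), -c1, -d1, a3, -e1, -r, a6, q + r]
  funext v
  rcases v with ⟨_ | _, _ | _, _ | _⟩
  · rw [g0]; rfl
  · rw [g4]; simp; linear_combination -he1
  · rw [g2]; simp; linear_combination -hd1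
  · rw [g6]; simp; linear_combination h6
  · rw [g1]; simp; linear_combination -hc1
  · rw [g5]; simp; linear_combination hp + x₂ * hr
  · rw [g3]; simp; linear_combination h3
  · rw [g7]; simp; linear_combination hq

theorem asgn212_free_basis :
    (∀ k : Fin 8, IsAsgn212 (B212 k)) ∧
    LinearIndependent S2 B212 ∧
    (∀ f : V3 → S2, IsAsgn212 f →
      ∃ a : Fin 8 → S2, f = fun v => ∑ k, a k * B212 k v) :=
  ⟨B212_asgn, B212_indep, B212_span⟩
end

section
/- The set {f(212) : f ∈ A(Γ_{[2,1,2]}) and f(v) = 0 for all vertices v ≠ 212} is exactly the principal ideal of S generated by x_1·x_2·(x_1 + x_2). Equivalently, a polynomial g ∈ S is the value at 212 of an assignment supported at the single vertex 212 if and only if x_1 x_2 (x_1 + x_2) divides g. (This is the generating ideal I_(212) of the flow-up of the top vertex.) -/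
open MvPolynomial

lemma aux212 (i : Fin 2) (v : Fin 2 → ℝ) (hv : v i = 0) (p c : S2) (hp : eval v p ≠ 0)
    (h : (X i : S2) ∣ p * c) : (X i : S2) ∣ c := by
  rcases (MvPolynomial.X_prime (R := ℝ) (i := i)).dvd_or_dvd h with h | h
  · obtain ⟨q, rfl⟩ := h
    exact absurd (by simp [hv]) hp
  · exact h

/-- The set of values at the top vertex `212` of assignments for `Γ_{[2,1,2]}` supported
at the single vertex `212` is exactly the principal ideal generated by
`x₁·x₂·(x₁ + x₂)`; equivalently, `g` is such a value iff `x₁ x₂ (x₁ + x₂) ∣ g`. -/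
theorem flowup_ideal_212 :
    {g : S2 | ∃ f : V3 → S2, IsAsgn212 f ∧
        (∀ v : V3, v ≠ (true, true, true) → f v = 0) ∧ g = f (true, true, true)} =
      ↑(Ideal.span {x₁ * x₂ * (x₁ + x₂)}) := by
  ext g
  simp only [Set.mem_ofPred_eq, SetLike.mem_coe, Ideal.mem_span_singleton]
  constructor
  · rintro ⟨f, ⟨h1, h2, h3⟩, h0, rfl⟩
    have a1 := h1 true true
    have a2 := h2 true true
    have a3 := h3 true true
    rw [h0 _ (by decide), zero_sub, dvd_neg] at a1 a2 a3
    simp only [lab1, lab2, if_true] at a1 a2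
    obtain ⟨c, hc⟩ := a2
    rw [hc] at a1 a3 ⊢
    obtain ⟨d, rfl⟩ : x₁ ∣ c := aux212 0 ![0, 1] (by simp) _ c (by simp [x₁, x₂]) a1
    rw [← mul_assoc] at a3
    obtain ⟨e, rfl⟩ : x₂ ∣ d := aux212 1 ![1, 0] (by simp) _ d (by simp [x₁, x₂]) a3
    exact ⟨e, by ring⟩
  · rintro ⟨c, rfl⟩
    refine ⟨fun v => if v = (true, true, true) then x₁ * x₂ * (x₁ + x₂) * c else 0,
      ⟨?_, ?_, ?_⟩, fun v hv => if_neg hv, by simp⟩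
    · rintro (_ | _) (_ | _) <;> simp [lab1]
      exact ⟨x₂ * (x₁ + x₂) * c, by ring⟩
    · rintro (_ | _) (_ | _) <;> simp [lab2]
      exact ⟨x₁ * x₂ * c, by ring⟩
    · rintro (_ | _) (_ | _) <;> simp
      exact ⟨x₁ * (x₁ + x₂) * c, by ring⟩
end

section
/- The set {f(002) : f ∈ A(Γ_{[2,1,2]}) and f(v) = 0 for all vertices v ∉ {002, 012, 212}} is exactly the ideal of S generated by x_1 x_2 and x_2². Moreover, this ideal ⟨x_1 x_2, x_2²⟩ of ℝ[x_1, x_2] is not a principal ideal. (This is the generating ideal I_(002) of the flow-up {002, 012, 212} of the vertex 002, the unique non-principal generating ideal in this example.) -/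
open MvPolynomial

lemma x2_prime : Prime x₂ := by
  unfold x₂
  exact X_prime

lemma x1_prime : Prime x₁ := by
  unfold x₁
  exact X_prime

lemma x2_ndvd_x1 : ¬ x₂ ∣ x₁ := by
  rintro ⟨u, hu⟩
  have := congrArg (eval ![(1 : ℝ), 0]) hu
  simp [x₁, x₂] at this

lemma x1_ndvd_x2 : ¬ x₁ ∣ x₂ := by
  rintro ⟨u, hu⟩
  have := congrArg (eval ![(0 : ℝ), 1]) hu
  simp [x₁, x₂] at this

lemma x2_ndvd_add : ¬ x₂ ∣ x₁ + x₂ := by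
  intro h
  exact x2_ndvd_x1 ((dvd_add_left (dvd_refl x₂)).1 h)

/-- An assignment supported on `{002, 012, 212}` from values `a`, `b`. -/
noncomputable def mkAsgn (a b : S2) : V3 → S2
  | (false, false, true) => a
  | (false, true, true) => b
  | _ => 0

/-- The set of values at the vertex `002` of assignments for `Γ_{[2,1,2]}` supported on
the flow-up `{002, 012, 212}` is exactly the ideal `⟨x₁x₂, x₂²⟩` of `ℝ[x₁, x₂]`;
moreover this ideal is not principal. -/
theorem flowup_ideal_002 :
    ({g : S2 | ∃ f : V3 → S2, IsAsgn212 f ∧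
        (∀ v : V3, v ∉ ({(false, false, true), (false, true, true), (true, true, true)} :
          Set V3) → f v = 0) ∧ g = f (false, false, true)} =
      ↑(Ideal.span {x₁ * x₂, x₂ ^ 2})) ∧
    ¬ (Ideal.span {x₁ * x₂, x₂ ^ 2} : Ideal S2).IsPrincipal := by
  constructor
  · ext g
    simp only [Set.mem_ofPred_eq, SetLike.mem_coe, Ideal.mem_span_pair]
    constructor
    · rintro ⟨f, ⟨h1, h2, h3⟩, h0, rfl⟩
      have z1 : f (true, false, true) = 0 := h0 _ (by simp)
      have z2 : f (false, false, false) = 0 := h0 _ (by simp)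
      have z3 : f (false, true, false) = 0 := h0 _ (by simp)
      have z4 : f (true, true, false) = 0 := h0 _ (by simp)
      have e1 := h1 true true
      have e2 := h2 false true
      have e3 := h2 true true
      have e4 := h3 false false
      have e5 := h3 false true
      have e6 := h3 true true
      simp only [lab1, lab2, if_true, z1, z2, z3, z4, zero_sub, dvd_neg] at e1 e2 e3 e4 e5 e6
      obtain ⟨m, hm⟩ := e1
      obtain ⟨n, hn⟩ := e2
      obtain ⟨k, hk⟩ := e3
      have d1 : x₂ ∣ m := (x2_prime.dvd_or_dvd (hm ▸ dvd_sub e5 e6)).resolve_left x2_ndvd_x1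
      have d2 : x₂ ∣ n := (x2_prime.dvd_or_dvd (hn ▸ dvd_sub e4 e5)).resolve_left x2_ndvd_add
      have d3 : x₂ ∣ k := (x2_prime.dvd_or_dvd (hk ▸ e6)).resolve_left x2_ndvd_add
      obtain ⟨m, rfl⟩ := d1
      obtain ⟨n, rfl⟩ := d2
      obtain ⟨k, rfl⟩ := d3
      refine ⟨k + n + m, k + n, ?_⟩
      linear_combination -hm - hn - hk
    · rintro ⟨p, q, rfl⟩
      refine ⟨mkAsgn (p * (x₁ * x₂) + q * x₂ ^ 2) ((p - q) * (x₁ * x₂)), ⟨?_, ?_, ?_⟩, ?_, rfl⟩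
      · rintro (_ | _) (_ | _) <;> simp [mkAsgn, lab1]
        · exact ⟨p * x₁ + q * x₂, by ring⟩
        · exact ⟨(p - q) * x₂, by ring⟩
      · rintro (_ | _) (_ | _) <;> simp [mkAsgn, lab2]
        exact ⟨q * x₂, by ring⟩
      · rintro (_ | _) (_ | _) <;> simp [mkAsgn]
        · exact ⟨-(p * x₁ + q * x₂), by ring⟩
        · exact ⟨(p - q) * x₁, by ring⟩
      · rintro ⟨_ | _, _ | _, _ | _⟩ hv <;> simp_all [mkAsgn]
  · rintro ⟨g, hg⟩
    have hg' : Ideal.span {x₁ * x₂, x₂ ^ 2} = Ideal.span {g} := hg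
    have m1 : x₁ * x₂ ∈ Ideal.span {g} := hg' ▸ Ideal.subset_span (by simp)
    have m2 : x₂ ^ 2 ∈ Ideal.span {g} := hg' ▸ Ideal.subset_span (by simp)
    have m3 : g ∈ Ideal.span {x₁ * x₂, x₂ ^ 2} := hg' ▸ Ideal.subset_span (by simp)
    obtain ⟨p, q, rfl⟩ := Ideal.mem_span_pair.1 m3
    obtain ⟨u, hu⟩ := Ideal.mem_span_singleton.1 m1
    obtain ⟨v, hv⟩ := Ideal.mem_span_singleton.1 m2
    have hu' : x₁ = (p * x₁ + q * x₂) * u :=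
      mul_left_cancel₀ x2_prime.ne_zero (by linear_combination hu)
    have hv' : x₂ = (p * x₁ + q * x₂) * v :=
      mul_left_cancel₀ x2_prime.ne_zero (by linear_combination hv)
    rcases x1_prime.irreducible.isUnit_or_isUnit hu' with h | h
    · have := h.map (eval ![(0 : ℝ), 0])
      simp [x₁, x₂] at this
    · apply x1_ndvd_x2
      have d : x₁ ∣ p * x₁ + q * x₂ := by
        conv_lhs => rw [hu']
        exact (h.mul_right_dvd).2 dvd_rfl
      rw [hv']
      exact d.mul_right v
end
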